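/- Edge trace identity for the linearized Cotton–York operator: for every C^∞ matrix field τ : ℝ³ → ℝ^{3×3} with symmetric values and every choice of pairwise orthogonal unit vectors t, m, n ∈ ℝ³ with t' := n × m, the identity tᵀ (tr3cott(τ)) t = n · tre2(τ) − (1/2) div_f(div_f(tr1cott(τ))) holds at every point of ℝ³. -/

import Mathlib

noncomputable section

open Matrix

/-- Vectors in ℝ³. -/
abbrev V3 := Fin 3 → ℝ
/-- 3×3 real matrices. -/
abbrev M3 := Matrix (Fin 3) (Fin 3) ℝ

/-- Partial derivative ∂ᵢ of a scalar field. -/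
def pd (i : Fin 3) (f : V3 → ℝ) : V3 → ℝ :=
  fun x => fderiv ℝ f x (Pi.single i 1)

/-- Gradient matrix of a vector field: (grad v)_{ij} = ∂ⱼ vᵢ. -/
def vgrad (v : V3 → V3) : V3 → M3 :=
  fun x => Matrix.of fun i j => pd j (fun y => v y i) x

/-- Divergence of a vector field. -/
def vdiv (v : V3 → V3) : V3 → ℝ :=
  fun x => ∑ i, pd i (fun y => v y i) x

/-- Cross product on ℝ³. -/
def cross (a b : V3) : V3 :=
  fun i => a (i + 1) * b (i + 2) - a (i + 2) * b (i + 1)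

/-- Curl of a vector field. -/
def vcurl (v : V3 → V3) : V3 → V3 :=
  fun x i => pd (i + 1) (fun y => v y (i + 2)) x - pd (i + 2) (fun y => v y (i + 1)) x

/-- Row-wise curl of a matrix field. -/
def mcurl (τ : V3 → M3) : V3 → M3 :=
  fun x => Matrix.of fun i j =>
    pd (j + 1) (fun y => τ y i (j + 2)) x - pd (j + 2) (fun y => τ y i (j + 1)) x

/-- Row-wise divergence of a matrix field. -/
def mdiv (τ : V3 → M3) : V3 → V3 :=
  fun x i => ∑ j, pd j (fun y => τ y i j) x

/-- Symmetric part of a matrix. -/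
def msym (A : M3) : M3 := (1 / 2 : ℝ) • (A + Aᵀ)

/-- Deviatoric (trace-free) part of a matrix. -/
def devm (A : M3) : M3 := A - ((1 / 3 : ℝ) * A.trace) • (1 : M3)

/-- The skew-symmetric matrix associated to a vector: mskw(ω) y = ω × y. -/
def mskw (w : V3) : M3 := !![0, -w 2, w 1; w 2, 0, -w 0; -w 1, w 0, 0]

/-- vskw(A) := mskw⁻¹(skw A). -/
def vskw (A : M3) : V3 :=
  (1 / 2 : ℝ) • ![A 2 1 - A 1 2, A 0 2 - A 2 0, A 1 0 - A 0 1]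

/-- S⁻¹(A) := Aᵀ − (1/2)(tr A)I. -/
def Sinv (A : M3) : M3 := Aᵀ - ((1 / 2 : ℝ) * A.trace) • (1 : M3)

/-- S(A) := Aᵀ − (tr A)I. -/
def Sop (A : M3) : M3 := Aᵀ - A.trace • (1 : M3)

/-- Incompatibility operator inc τ := curl (S⁻¹ (curl τ)). -/
def inc (τ : V3 → M3) : V3 → M3 := mcurl fun x => Sinv (mcurl τ x)

/-- Linearized Cotton–York operator cott τ := curl (S⁻¹ (inc τ)). -/
def cott (τ : V3 → M3) : V3 → M3 := mcurl fun x => Sinv (inc τ x)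

/-- Hessian matrix of a scalar field. -/
def hess (u : V3 → ℝ) : V3 → M3 :=
  fun x => Matrix.of fun i j => pd i (pd j u) x

/-- Euclidean dot product on ℝ³. -/
def dotp (a b : V3) : ℝ := ∑ i, a i * b i

/-- Smoothness of a vector field (componentwise C^∞). -/
def SmoothV (v : V3 → V3) : Prop := ∀ i, ContDiff ℝ (⊤ : ℕ∞) fun x => v x i

/-- Smoothness of a matrix field (entrywise C^∞). -/
def SmoothM (τ : V3 → M3) : Prop := ∀ i j, ContDiff ℝ (⊤ : ℕ∞) fun x => τ x i j

/-- Conformal Killing fields. -/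
def CK (v : V3 → V3) : Prop :=
  ∃ (a c d : V3) (b : ℝ), ∀ x,
    v x = dotp x x • a - (2 * dotp a x) • x + b • x + cross c x + d

/-- Rigid motions. -/
def RM (v : V3 → V3) : Prop := ∃ a b : V3, ∀ x, v x = cross a x + b

/-- Lowest-order Raviart–Thomas fields. -/
def RT (v : V3 → V3) : Prop := ∃ (a : V3) (b : ℝ), ∀ x, v x = a + b • x

/-- Polynomial scalar functions of total degree at most k. -/
def PolyLe (k : ℕ) (f : V3 → ℝ) : Prop :=
  ∃ p : MvPolynomial (Fin 3) ℝ, p.totalDegree ≤ k ∧ ∀ x, f x = MvPolynomial.eval x p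

/-- Matrix fields with entries in P_k and values symmetric traceless. -/
def PolyLeST (k : ℕ) (τ : V3 → M3) : Prop :=
  (∀ i j, PolyLe k fun x => τ x i j) ∧ (∀ x, (τ x)ᵀ = τ x) ∧ ∀ x, (τ x).trace = 0


/-- Directional derivative of a scalar field along a fixed vector w. -/
def pdir (w : V3) (f : V3 → ℝ) : V3 → ℝ := fun x => fderiv ℝ f x w

/-- Entrywise directional derivative of a vector field. -/
def pdirV (w : V3) (v : V3 → V3) : V3 → V3 := fun x i => pdir w (fun y => v y i) x

/-- Entrywise directional derivative of a matrix field. -/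
def pdirM (w : V3) (A : V3 → M3) : V3 → M3 :=
  fun x => Matrix.of fun i j => pdir w (fun y => A y i j) x

/-- Column-wise curl ∇ × A: the j-th column is the curl of the j-th column of A. -/
def colcurl (A : V3 → M3) : V3 → M3 :=
  fun x => Matrix.of fun i j =>
    pd (i + 1) (fun y => A y (i + 2) j) x - pd (i + 2) (fun y => A y (i + 1) j) x

/-- Gradient of a scalar field as a vector field. -/
def gradS (f : V3 → ℝ) : V3 → V3 := fun x i => pd i f x

/-- Projection matrix Π := I − n nᵀ. -/
def Pm (n : V3) : M3 := 1 - Matrix.vecMulVec n n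

/-- Row-wise cross product of a matrix with a vector. -/
def mcrossv (A : M3) (w : V3) : M3 := Matrix.of fun i => cross (A i) w

/-- Surface gradient grad_f w := (grad w) Π. -/
def gradf (n : V3) (w : V3 → V3) : V3 → M3 := fun x => vgrad w x * Pm n

/-- Surface deformation def_f w := sym (grad_f w). -/
def deff (n : V3) (w : V3 → V3) : V3 → M3 := fun x => msym (gradf n w x)

/-- Surface divergence of a matrix field: div_f A := (∂_t A) t + (∂_m A) m. -/
def divfM (t m : V3) (A : V3 → M3) : V3 → V3 :=
  fun x => (pdirM t A x).mulVec t + (pdirM m A x).mulVec m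

/-- Surface divergence of a vector field: div_f w := t·∂_t w + m·∂_m w. -/
def divfV (t m : V3) (w : V3 → V3) : V3 → ℝ :=
  fun x => dotp t (pdirV t w x) + dotp m (pdirV m w x)

/-- Surface deviatoric part dev_f A := ΠAΠ − (1/2) tr(ΠAΠ) Π. -/
def devf (n : V3) (A : M3) : M3 :=
  Pm n * A * Pm n - ((1 / 2 : ℝ) * (Pm n * A * Pm n).trace) • Pm n

/-- tr2inc(τ) := 2 def_f(Πτn) − Π(∂_n τ)Π. -/
def tr2inc (n : V3) (τ : V3 → M3) : V3 → M3 :=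
  fun x => (2 : ℝ) • deff n (fun y => (Pm n * τ y).mulVec n) x - Pm n * pdirM n τ x * Pm n

/-- tr1cott(τ) := sym((Πτ) × n). -/
def tr1cott (n : V3) (τ : V3 → M3) : V3 → M3 :=
  fun x => msym (mcrossv (Pm n * τ x) n)

/-- tr2cott(τ) := sym(tr2inc(τ) × n). -/
def tr2cott (n : V3) (τ : V3 → M3) : V3 → M3 :=
  fun x => msym (mcrossv (tr2inc n τ x) n)

/-- tr3cott(τ) := dev_f(tr2inc(sym curl τ)). -/
def tr3cott (n : V3) (τ : V3 → M3) : V3 → M3 :=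
  fun x => devf n (tr2inc n (fun y => msym (mcurl τ y)) x)

/-- tre2(τ) := 2(∂_t(sym curl τ))t − ∇(tᵀ(curl τ)t). -/
def tre2 (t : V3) (τ : V3 → M3) : V3 → V3 :=
  fun x => (2 : ℝ) • (pdirM t (fun y => msym (mcurl τ y)) x).mulVec t
    - gradS (fun y => dotp t ((mcurl τ y).mulVec t)) x

/-- tre3(τ) := −tᵀ(∇ × (sym curl τ))t − (1/2)∂_t(t·div τ). -/
def tre3 (t : V3) (τ : V3 → M3) : V3 → ℝ :=
  fun x => -dotp t ((colcurl (fun y => msym (mcurl τ y)) x).mulVec t)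
    - (1 / 2 : ℝ) * pdir t (fun y => dotp t (mdiv τ y)) x

/-!
With `C = curl τ`, `σ = sym C` and `G = grad (σ n)`, one has `tr2inc(σ) = Π (2 sym G - ∂ₙσ) Π`.

* The quadratic form of `2 sym G - ∂ₙσ` at `t` is `2 n · (∂ₜσ) t - t · (∂ₙC) t = n · tre2(τ)`.
* `dev_f` subtracts half the trace of `tr2inc(σ)`. As `div C = 0` and `tr C = 0`, this trace is
  `div (C n) - n · ∂ₙ(C n) = div (Π C n)`. Moreover `C n = div (τ × n)`, so the trace equals
  `div div ((Πτ) × n)`, in which only the symmetric part `tr1cott(τ)` matters. Since `tr1cott(τ)`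
  annihilates `n` on both sides, `div div` may be replaced by `div_f div_f`.
-/

section Algebra

variable (A P : M3) {t m n : V3}

theorem dotp_eq_dotProduct (a b : V3) : dotp a b = a ⬝ᵥ b := rfl

theorem transpose_msym : (msym A)ᵀ = msym A := by
  simp [msym, add_comm]

theorem trace_msym : (msym A).trace = A.trace := by
  simp only [msym, trace_smul, trace_add, trace_transpose, smul_eq_mul]
  ring

theorem dotProduct_msym_mulVec_self (a : V3) : a ⬝ᵥ msym A *ᵥ a = a ⬝ᵥ A *ᵥ a := by
  simp only [msym, smul_mulVec, add_mulVec, dotProduct_smul, dotProduct_add,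
    dotProduct_transpose_mulVec, smul_eq_mul]
  ring

theorem msym_mul_mul_transpose : msym (P * A * Pᵀ) = P * msym A * Pᵀ := by
  simp [msym, Matrix.mul_add, Matrix.add_mul, Matrix.mul_assoc]

theorem mcrossv_eq_mul_mskw (w : V3) : mcrossv A w = A * mskw w := by
  ext i j
  simp only [mcrossv, of_apply, cross, mul_apply, Fin.sum_univ_three]
  fin_cases j <;> simp [mskw] <;> ring

theorem mcrossv_mul (w : V3) : mcrossv (P * A) w = P * mcrossv A w := by
  simp only [mcrossv_eq_mul_mskw, Matrix.mul_assoc]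

theorem mcrossv_mulVec_self (w : V3) : mcrossv A w *ᵥ w = 0 := by
  ext i
  simp only [mulVec, dotProduct, mcrossv, of_apply, cross, Fin.sum_univ_three, Fin.isValue,
    zero_add, Fin.reduceAdd, Pi.zero_apply]
  ring

theorem transpose_Pm (n : V3) : (Pm n)ᵀ = Pm n := by
  simp [Pm, transpose_vecMulVec]

theorem Pm_mulVec (n v : V3) : Pm n *ᵥ v = v - (n ⬝ᵥ v) • n := by
  simp [Pm, sub_mulVec, vecMulVec_mulVec]

theorem Pm_mulVec_self (hn : n ⬝ᵥ n = 1) : Pm n *ᵥ n = 0 := by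
  simp [Pm_mulVec, hn]

theorem Pm_mulVec_of_dotProduct_eq_zero (htn : t ⬝ᵥ n = 0) : Pm n *ᵥ t = t := by
  simp [Pm_mulVec, dotProduct_comm n t, htn]

theorem Pm_mul_self (hn : n ⬝ᵥ n = 1) : Pm n * Pm n = Pm n := by
  simp [Pm, Matrix.mul_sub, Matrix.sub_mul, vecMulVec_mul_vecMulVec, hn]

theorem trace_Pm_mul (n : V3) : (Pm n * A).trace = A.trace - n ⬝ᵥ A *ᵥ n := by
  rw [trace_mul_comm, Pm, Matrix.mul_sub, Matrix.mul_one, mul_vecMulVec, trace_sub,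
    trace_vecMulVec, dotProduct_comm]

theorem trace_Pm_mul_mul_Pm (hn : n ⬝ᵥ n = 1) :
    (Pm n * A * Pm n).trace = A.trace - n ⬝ᵥ A *ᵥ n := by
  rw [trace_mul_cycle, Pm_mul_self hn, trace_Pm_mul]

theorem dotProduct_Pm_mul_mul_Pm_mulVec (htn : t ⬝ᵥ n = 0) :
    t ⬝ᵥ (Pm n * A * Pm n) *ᵥ t = t ⬝ᵥ A *ᵥ t := by
  have hPt := Pm_mulVec_of_dotProduct_eq_zero htn
  rw [← mulVec_mulVec, hPt, ← mulVec_mulVec, dotProduct_mulVec, ← transpose_Pm,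
    vecMul_transpose, hPt]

theorem dotProduct_devf_mulVec (ht : t ⬝ᵥ t = 1) (htn : t ⬝ᵥ n = 0) :
    t ⬝ᵥ devf n A *ᵥ t = t ⬝ᵥ A *ᵥ t - 1 / 2 * (Pm n * A * Pm n).trace := by
  rw [devf, sub_mulVec, dotProduct_sub, dotProduct_Pm_mul_mul_Pm_mulVec A htn, smul_mulVec,
    Pm_mulVec_of_dotProduct_eq_zero htn, dotProduct_smul, ht, smul_eq_mul, mul_one]

theorem sum_vecMulVec_self_eq_one (ht : t ⬝ᵥ t = 1) (hm : m ⬝ᵥ m = 1) (hn : n ⬝ᵥ n = 1)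
    (htm : t ⬝ᵥ m = 0) (htn : t ⬝ᵥ n = 0) (hmn : m ⬝ᵥ n = 0) :
    vecMulVec t t + vecMulVec m m + vecMulVec n n = 1 := by
  have hrows : (of ![t, m, n] : M3) * (of ![t, m, n])ᵀ = 1 := by
    ext a b
    change ![t, m, n] a ⬝ᵥ ![t, m, n] b = (1 : M3) a b
    fin_cases a <;> fin_cases b <;>
      simp [ht, hm, hn, htm, htn, hmn, dotProduct_comm m t, dotProduct_comm n t,
        dotProduct_comm n m]
  rw [← mul_eq_one_comm.mp hrows]
  ext i j
  simp [mul_apply, vecMulVec_apply, Fin.sum_univ_three]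

theorem trace_eq_of_sum_vecMulVec_self
    (hframe : vecMulVec t t + vecMulVec m m + vecMulVec n n = 1) :
    A.trace = t ⬝ᵥ A *ᵥ t + m ⬝ᵥ A *ᵥ m + n ⬝ᵥ A *ᵥ n := by
  conv_lhs => rw [← Matrix.mul_one A, ← hframe]
  simp only [Matrix.mul_add, mul_vecMulVec, trace_add, trace_vecMulVec, dotProduct_comm]

end Algebra

section FirstOrder

variable {A : V3 → M3} {v : V3 → V3} {x : V3}

theorem pdir_eq_dotProduct_gradS (w : V3) (f : V3 → ℝ) (x : V3) :
    pdir w f x = w ⬝ᵥ gradS f x := by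
  conv_lhs => rw [pdir, pi_eq_sum_univ' w]
  simp [gradS, pd, dotProduct, map_sum]

theorem pdirV_eq_vgrad_mulVec (w : V3) (v : V3 → V3) (x : V3) :
    pdirV w v x = vgrad v x *ᵥ w := by
  ext i
  rw [pdirV, pdir_eq_dotProduct_gradS, dotProduct_comm]
  rfl

theorem vdiv_eq_trace_vgrad (v : V3 → V3) (x : V3) : vdiv v x = (vgrad v x).trace := rfl

theorem mdiv_apply (A : V3 → M3) (x : V3) (i : Fin 3) :
    mdiv A x i = vdiv (fun y => A y i) x := rfl

theorem pdir_sum_mul {ι : Type*} [Fintype ι] (c : ι → ℝ) {f : ι → V3 → ℝ}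
    (hf : ∀ i, DifferentiableAt ℝ (f i) x) (w : V3) :
    pdir w (fun y => ∑ i, c i * f i y) x = ∑ i, c i * pdir w (f i) x := by
  simp only [pdir]
  rw [fderiv_fun_sum fun i _ => (hf i).const_mul (c i)]
  simp [fderiv_const_mul (hf _)]

theorem pdir_const_dotProduct (a w : V3) (hv : ∀ i, DifferentiableAt ℝ (fun y => v y i) x) :
    pdir w (fun y => a ⬝ᵥ v y) x = a ⬝ᵥ pdirV w v x :=
  pdir_sum_mul a hv w

theorem vgrad_const_mulVec (P : M3) (hv : ∀ i, DifferentiableAt ℝ (fun y => v y i) x) :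
    vgrad (fun y => P *ᵥ v y) x = P * vgrad v x := by
  ext i j
  exact pdir_const_dotProduct (P i) (Pi.single j 1) hv

theorem vdiv_Pm_mulVec (n : V3) (hv : ∀ i, DifferentiableAt ℝ (fun y => v y i) x) :
    vdiv (fun y => Pm n *ᵥ v y) x = vdiv v x - n ⬝ᵥ pdirV n v x := by
  rw [vdiv_eq_trace_vgrad, vgrad_const_mulVec _ hv, trace_Pm_mul, vdiv_eq_trace_vgrad,
    pdirV_eq_vgrad_mulVec]

theorem differentiableAt_mulVec_const (u : V3)
    (hA : ∀ i j, DifferentiableAt ℝ (fun y => A y i j) x) (i : Fin 3) :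
    DifferentiableAt ℝ (fun y => (A y *ᵥ u) i) x := by
  simp only [mulVec, dotProduct]
  fun_prop

theorem pdirV_mulVec_const (u w : V3) (hA : ∀ i j, DifferentiableAt ℝ (fun y => A y i j) x) :
    pdirV w (fun y => A y *ᵥ u) x = pdirM w A x *ᵥ u := by
  ext i
  simp only [pdirV, mulVec, dotProduct_comm _ u]
  exact pdir_const_dotProduct u w (hA i)

theorem vdiv_mulVec_const (u : V3) (hA : ∀ i j, DifferentiableAt ℝ (fun y => A y i j) x) :
    vdiv (fun y => A y *ᵥ u) x = u ⬝ᵥ mdiv (fun y => (A y)ᵀ) x := by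
  have hpd : ∀ i, pd i (fun y => (A y *ᵥ u) i) x = ∑ j, u j * pd i (fun y => A y i j) x := by
    intro i
    simp only [mulVec, dotProduct_comm _ u]
    exact pdir_sum_mul u (hA i) (Pi.single i 1)
  simp only [vdiv, hpd, dotProduct, mdiv, transpose_apply, Finset.mul_sum]
  exact Finset.sum_comm

theorem mdiv_const_mul (P : M3) (hA : ∀ i j, DifferentiableAt ℝ (fun y => A y i j) x) :
    mdiv (fun y => P * A y) x = P *ᵥ mdiv A x := by
  ext i
  have hpd : ∀ j, pd j (fun y => (P * A y) i j) x = ∑ k, P i k * pd j (fun y => A y k j) x :=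
    fun j => pdir_sum_mul (P i) (fun k => hA k j) (Pi.single j 1)
  simp only [mdiv, hpd, mulVec, dotProduct, Finset.mul_sum]
  exact Finset.sum_comm

theorem trace_pdirM (w : V3) (hA : ∀ i j, DifferentiableAt ℝ (fun y => A y i j) x) :
    (pdirM w A x).trace = pdir w (fun y => (A y).trace) x := by
  simpa [Matrix.trace, pdirM] using (pdir_sum_mul 1 (fun i => hA i i) w).symm

theorem differentiableAt_msym (hA : ∀ i j, DifferentiableAt ℝ (fun y => A y i j) x)
    (i j : Fin 3) : DifferentiableAt ℝ (fun y => msym (A y) i j) x :=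
  ((hA i j).add (hA j i)).const_mul _

theorem pdirM_msym (w : V3) (hA : ∀ i j, DifferentiableAt ℝ (fun y => A y i j) x) :
    pdirM w (fun y => msym (A y)) x = msym (pdirM w A x) := by
  ext i j
  have hsum := pdir_sum_mul ![1 / 2, 1 / 2] (f := ![fun y => A y i j, fun y => A y j i])
    (x := x) (by simp [Fin.forall_fin_two, hA]) w
  simpa [msym, pdirM, Fin.sum_univ_two, mul_add] using hsum

theorem mdiv_msym (hA : ∀ i j, DifferentiableAt ℝ (fun y => A y i j) x) :
    mdiv (fun y => msym (A y)) x =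
      (1 / 2 : ℝ) • (mdiv A x + mdiv (fun y => (A y)ᵀ) x) := by
  ext i
  have hpd : ∀ j, pd j (fun y => msym (A y) i j) x =
      1 / 2 * (pd j (fun y => A y i j) x + pd j (fun y => A y j i) x) :=
    fun j => congrFun (congrFun (pdirM_msym (Pi.single j 1) hA) i) j
  simp only [mdiv, hpd, ← Finset.mul_sum, Finset.sum_add_distrib]
  rfl

theorem vcurl_dotProduct (u : V3) (hv : ∀ i, DifferentiableAt ℝ (fun y => v y i) x) :
    vcurl v x ⬝ᵥ u = vdiv (fun y => cross (v y) u) x := by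
  have hpd : ∀ i, pd i (fun y => cross (v y) u i) x =
      u (i + 2) * pd i (fun y => v y (i + 1)) x - u (i + 1) * pd i (fun y => v y (i + 2)) x := by
    intro i
    simp only [pd, cross]
    rw [fderiv_fun_sub ((hv _).mul_const _) ((hv _).mul_const _), fderiv_mul_const (hv _),
      fderiv_mul_const (hv _)]
    rfl
  simp only [dotProduct, vcurl, vdiv, hpd, Fin.sum_univ_three, Fin.isValue, zero_add,
    Fin.reduceAdd]
  ring

theorem mcurl_mulVec (u : V3) (hA : ∀ i j, DifferentiableAt ℝ (fun y => A y i j) x) :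
    mcurl A x *ᵥ u = mdiv (fun y => mcrossv (A y) u) x := by
  ext i
  exact vcurl_dotProduct u (hA i)

theorem trace_mcurl_of_symm (hsym : ∀ x, (A x)ᵀ = A x) (x : V3) : (mcurl A x).trace = 0 := by
  have hswap : ∀ i j, (fun y => A y i j) = fun y => A y j i :=
    fun i j => funext fun y => congrFun (congrFun (hsym y) j) i
  simp only [Matrix.trace, mcurl, diag_apply, of_apply, Fin.sum_univ_three, Fin.isValue, zero_add,
    Fin.reduceAdd, hswap 1 0, hswap 2 0, hswap 2 1]
  ring

end FirstOrder

section SecondOrder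

variable {A : V3 → M3} {v : V3 → V3} {f : V3 → ℝ}

theorem contDiff_pd (hf : ContDiff ℝ 2 f) (i : Fin 3) : ContDiff ℝ 1 (pd i f) :=
  (hf.fderiv_right (m := 1) (by norm_num [one_add_one_eq_two])).clm_apply contDiff_const

theorem pd_comm (hf : ContDiff ℝ 2 f) (i j : Fin 3) (x : V3) :
    pd i (pd j f) x = pd j (pd i f) x := by
  have hdf : DifferentiableAt ℝ (fderiv ℝ f) x :=
    (hf.fderiv_right (m := 1) (by norm_num [one_add_one_eq_two])).differentiable one_ne_zero x
  have hpd : ∀ a b, pd a (pd b f) x =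
      fderiv ℝ (fderiv ℝ f) x (Pi.single a 1) (Pi.single b 1) := by
    intro a b
    change fderiv ℝ (fun y => fderiv ℝ f y (Pi.single b 1)) x (Pi.single a 1) = _
    rw [fderiv_clm_apply hdf (differentiableAt_const _)]
    simp
  rw [hpd, hpd]
  exact hf.contDiffAt.isSymmSndFDerivAt (by simp) _ _

theorem contDiff_msym {k : WithTop ℕ∞} (hA : ∀ i j, ContDiff ℝ k fun y => A y i j)
    (i j : Fin 3) : ContDiff ℝ k fun y => msym (A y) i j :=
  contDiff_const.mul ((hA i j).add (hA j i))

theorem contDiff_matrix_const_mul {k : WithTop ℕ∞} (P : M3)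
    (hA : ∀ i j, ContDiff ℝ k fun y => A y i j) (i j : Fin 3) :
    ContDiff ℝ k fun y => (P * A y) i j := by
  simp only [mul_apply]
  fun_prop

theorem contDiff_mcrossv {k : WithTop ℕ∞} (w : V3) (hA : ∀ i j, ContDiff ℝ k fun y => A y i j)
    (i j : Fin 3) : ContDiff ℝ k fun y => mcrossv (A y) w i j :=
  ((hA i _).mul contDiff_const).sub ((hA i _).mul contDiff_const)

theorem vdiv_vcurl (hv : ∀ i, ContDiff ℝ 2 fun y => v y i) (x : V3) : vdiv (vcurl v) x = 0 := by
  have hd : ∀ i j, DifferentiableAt ℝ (pd i fun y => v y j) x :=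
    fun i j => (contDiff_pd (hv j) i).differentiable one_ne_zero x
  have hpd : ∀ i, pd i (fun y => vcurl v y i) x =
      pd i (pd (i + 1) fun y => v y (i + 2)) x - pd i (pd (i + 2) fun y => v y (i + 1)) x :=
    fun i => congrArg (· (Pi.single i 1)) (fderiv_fun_sub (hd _ _) (hd _ _))
  simp only [vdiv, hpd, Fin.sum_univ_three, Fin.isValue, zero_add, Fin.reduceAdd,
    pd_comm (hv _) 1 0, pd_comm (hv _) 2 0, pd_comm (hv _) 2 1]
  ring

theorem mdiv_mcurl (hA : ∀ i j, ContDiff ℝ 2 fun y => A y i j) : mdiv (mcurl A) = 0 := by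
  ext x i
  exact vdiv_vcurl (hA i) x

theorem contDiff_mcurl (hA : ∀ i j, ContDiff ℝ 2 fun y => A y i j) (i j : Fin 3) :
    ContDiff ℝ 1 fun y => mcurl A y i j :=
  (contDiff_pd (hA i _) _).sub (contDiff_pd (hA i _) _)

theorem contDiff_mdiv (hA : ∀ i j, ContDiff ℝ 2 fun y => A y i j) (i : Fin 3) :
    ContDiff ℝ 1 fun y => mdiv A y i :=
  ContDiff.sum fun j _ => contDiff_pd (hA i j) j

theorem vdiv_mdiv_eq_sum (hA : ∀ i j, ContDiff ℝ 2 fun y => A y i j) (x : V3) :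
    vdiv (mdiv A) x = ∑ i, ∑ j, pd i (pd j fun y => A y i j) x := by
  refine Finset.sum_congr rfl fun i _ => ?_
  simpa [mdiv, pd, pdir] using pdir_sum_mul 1
    (fun j => (contDiff_pd (hA i j) j).differentiable one_ne_zero x) (Pi.single i 1)

theorem vdiv_mdiv_transpose (hA : ∀ i j, ContDiff ℝ 2 fun y => A y i j) (x : V3) :
    vdiv (mdiv fun y => (A y)ᵀ) x = vdiv (mdiv A) x := by
  rw [vdiv_mdiv_eq_sum hA, vdiv_mdiv_eq_sum (A := fun y => (A y)ᵀ) fun i j => hA j i,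
    Finset.sum_comm]
  exact Finset.sum_congr rfl fun i _ => Finset.sum_congr rfl fun j _ => pd_comm (hA i j) j i x

theorem vdiv_mdiv_msym (hA : ∀ i j, ContDiff ℝ 2 fun y => A y i j) (x : V3) :
    vdiv (mdiv fun y => msym (A y)) x = vdiv (mdiv A) x := by
  have hpd : ∀ i j, pd i (pd j fun y => msym (A y) i j) x =
      1 / 2 * (pd i (pd j fun y => A y i j) x + pd i (pd j fun y => A y j i) x) := by
    intro i j
    have hinner : pdirM (Pi.single j 1) (fun y => msym (A y)) =
        fun y => msym (pdirM (Pi.single j 1) A y) :=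
      funext fun y => pdirM_msym _ fun k l => (hA k l).differentiable two_ne_zero y
    have houter := pdirM_msym (x := x) (Pi.single i 1) fun k l =>
      (contDiff_pd (hA k l) j).differentiable one_ne_zero x
    exact congrFun₂ ((congrArg (pdirM (Pi.single i 1) · x) hinner).trans houter) i j
  have hT : ∑ i, ∑ j, pd i (pd j fun y => A y j i) x = vdiv (mdiv A) x := by
    rw [← vdiv_mdiv_transpose hA]
    exact (vdiv_mdiv_eq_sum (A := fun y => (A y)ᵀ) (fun i j => hA j i) x).symm
  rw [vdiv_mdiv_eq_sum (contDiff_msym hA)]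
  simp only [hpd, ← Finset.mul_sum, Finset.sum_add_distrib]
  rw [hT, ← vdiv_mdiv_eq_sum hA]
  ring

end SecondOrder

section Surface

variable {τ σ S : V3 → M3} {t m n x : V3}

theorem vdiv_eq_divfV_add (hframe : vecMulVec t t + vecMulVec m m + vecMulVec n n = 1)
    (v : V3 → V3) (x : V3) : vdiv v x = divfV t m v x + n ⬝ᵥ pdirV n v x := by
  rw [vdiv_eq_trace_vgrad, trace_eq_of_sum_vecMulVec_self _ hframe]
  simp only [divfV, dotp_eq_dotProduct, pdirV_eq_vgrad_mulVec]

theorem mdiv_eq_divfM_add (hframe : vecMulVec t t + vecMulVec m m + vecMulVec n n = 1)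
    (S : V3 → M3) (x : V3) : mdiv S x = divfM t m S x + pdirM n S x *ᵥ n := by
  ext i
  rw [mdiv_apply, vdiv_eq_divfV_add hframe, dotProduct_comm]
  simp only [divfV, divfM, dotp_eq_dotProduct, dotProduct_comm t, dotProduct_comm m]
  rfl

theorem divfV_divfM_eq_vdiv_mdiv (hframe : vecMulVec t t + vecMulVec m m + vecMulVec n n = 1)
    (hS : ∀ i j, ContDiff ℝ 2 fun y => S y i j) (hSn : ∀ y, S y *ᵥ n = 0)
    (hSTn : ∀ y, (S y)ᵀ *ᵥ n = 0) (x : V3) :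
    divfV t m (divfM t m S) x = vdiv (mdiv S) x := by
  have hdS : ∀ y i j, DifferentiableAt ℝ (fun z => S z i j) y :=
    fun y i j => (hS i j).differentiable two_ne_zero y
  have hmdiv : mdiv S = divfM t m S := by
    funext y
    have hzero : pdirM n S y *ᵥ n = 0 := by
      rw [← pdirV_mulVec_const n n (hdS y)]
      ext i
      simp [hSn, pdirV, pdir]
    rw [mdiv_eq_divfM_add hframe, hzero, add_zero]
  have horth : ∀ y, n ⬝ᵥ mdiv S y = 0 := fun y => by
    have hdiv := vdiv_mulVec_const (A := fun z => (S z)ᵀ) n fun i j => hdS y j i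
    simpa [hSTn, vdiv, pd] using hdiv.symm
  have hnormal : n ⬝ᵥ pdirV n (mdiv S) x = 0 := by
    rw [← pdir_const_dotProduct n n fun i => (contDiff_mdiv hS i).differentiable one_ne_zero x]
    simp [horth, pdir]
  rw [vdiv_eq_divfV_add hframe, hnormal, add_zero, hmdiv]

theorem transpose_tr1cott (n : V3) (τ : V3 → M3) (x : V3) :
    (tr1cott n τ x)ᵀ = tr1cott n τ x :=
  transpose_msym _

theorem tr1cott_mulVec_self (hn : n ⬝ᵥ n = 1) (τ : V3 → M3) (x : V3) :
    tr1cott n τ x *ᵥ n = 0 := by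
  rw [tr1cott, msym, smul_mulVec, add_mulVec, mcrossv_mulVec_self, mcrossv_mul, transpose_mul,
    transpose_Pm, ← mulVec_mulVec, Pm_mulVec_self hn, mulVec_zero, add_zero, smul_zero]

theorem divfV_divfM_tr1cott (hframe : vecMulVec t t + vecMulVec m m + vecMulVec n n = 1)
    (hn : n ⬝ᵥ n = 1) (hτ : ∀ i j, ContDiff ℝ 2 fun y => τ y i j) (x : V3) :
    divfV t m (divfM t m (tr1cott n τ)) x =
      vdiv (mdiv fun y => Pm n * mcrossv (τ y) n) x := by
  have hB := contDiff_matrix_const_mul (Pm n) (contDiff_mcrossv n hτ)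
  have htr1 : tr1cott n τ = fun y => msym (Pm n * mcrossv (τ y) n) := by
    simp only [← mcrossv_mul, funext_iff, tr1cott, implies_true]
  rw [divfV_divfM_eq_vdiv_mdiv hframe (htr1 ▸ contDiff_msym hB) (tr1cott_mulVec_self hn τ)
    (fun y => by rw [transpose_tr1cott, tr1cott_mulVec_self hn]), htr1, vdiv_mdiv_msym hB]

theorem tr2inc_eq_Pm_mul_mul_Pm (n : V3)
    (hσ : ∀ i j, DifferentiableAt ℝ (fun y => σ y i j) x) :
    tr2inc n σ x =
      Pm n * ((2 : ℝ) • msym (vgrad (fun y => σ y *ᵥ n) x) - pdirM n σ x) * Pm n := by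
  have hconj := msym_mul_mul_transpose (vgrad (fun y => σ y *ᵥ n) x) (Pm n)
  rw [transpose_Pm] at hconj
  simp only [tr2inc, deff, gradf, ← mulVec_mulVec]
  rw [vgrad_const_mulVec _ (differentiableAt_mulVec_const n hσ), hconj]
  simp only [Matrix.mul_sub, Matrix.sub_mul, Matrix.mul_smul, Matrix.smul_mul]

theorem trace_Pm_mul_tr2inc_mul_Pm (hn : n ⬝ᵥ n = 1)
    (hσ : ∀ i j, DifferentiableAt ℝ (fun y => σ y i j) x) :
    (Pm n * tr2inc n σ x * Pm n).trace =
      2 * vdiv (fun y => σ y *ᵥ n) x - n ⬝ᵥ pdirM n σ x *ᵥ n - (pdirM n σ x).trace := by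
  have hidem : ∀ M : M3, Pm n * (Pm n * M * Pm n) * Pm n = Pm n * M * Pm n := fun M => by
    simp only [Matrix.mul_assoc, Pm_mul_self hn]
    simp only [← Matrix.mul_assoc, Pm_mul_self hn]
  rw [tr2inc_eq_Pm_mul_mul_Pm n hσ, hidem, trace_Pm_mul_mul_Pm _ hn, vdiv_eq_trace_vgrad]
  simp only [trace_sub, trace_smul, trace_msym, sub_mulVec, smul_mulVec, dotProduct_sub,
    dotProduct_smul, dotProduct_msym_mulVec_self, smul_eq_mul, ← pdirV_mulVec_const n n hσ,
    pdirV_eq_vgrad_mulVec]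
  ring

theorem dotProduct_tr2inc_mulVec (htn : t ⬝ᵥ n = 0)
    (hσ : ∀ i j, DifferentiableAt ℝ (fun y => σ y i j) x) :
    t ⬝ᵥ tr2inc n σ x *ᵥ t = 2 * (t ⬝ᵥ pdirM t σ x *ᵥ n) - t ⬝ᵥ pdirM n σ x *ᵥ t := by
  rw [tr2inc_eq_Pm_mul_mul_Pm n hσ, dotProduct_Pm_mul_mul_Pm_mulVec _ htn, sub_mulVec,
    smul_mulVec, dotProduct_sub, dotProduct_smul, dotProduct_msym_mulVec_self,
    ← pdirV_eq_vgrad_mulVec, pdirV_mulVec_const n t hσ, smul_eq_mul]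

end Surface

section SymCurl

variable {τ : V3 → M3} {t n x : V3}

theorem dotProduct_tre2 (hC : ∀ i j, DifferentiableAt ℝ (fun y => mcurl τ y i j) x) :
    n ⬝ᵥ tre2 t τ x =
      2 * (t ⬝ᵥ pdirM t (fun y => msym (mcurl τ y)) x *ᵥ n)
        - t ⬝ᵥ pdirM n (mcurl τ) x *ᵥ t := by
  have hgrad : n ⬝ᵥ gradS (fun y => t ⬝ᵥ mcurl τ y *ᵥ t) x = t ⬝ᵥ pdirM n (mcurl τ) x *ᵥ t := by
    rw [← pdir_eq_dotProduct_gradS, pdir_const_dotProduct t n (differentiableAt_mulVec_const t hC),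
      pdirV_mulVec_const t n hC]
  simp only [tre2, dotp_eq_dotProduct]
  rw [dotProduct_sub, dotProduct_smul, smul_eq_mul, hgrad, pdirM_msym t hC,
    ← dotProduct_transpose_mulVec, transpose_msym]

theorem dotProduct_tr2inc_msym_mcurl_mulVec (htn : t ⬝ᵥ n = 0)
    (hC : ∀ i j, DifferentiableAt ℝ (fun y => mcurl τ y i j) x) :
    t ⬝ᵥ tr2inc n (fun y => msym (mcurl τ y)) x *ᵥ t = n ⬝ᵥ tre2 t τ x := by
  rw [dotProduct_tr2inc_mulVec htn (differentiableAt_msym hC), dotProduct_tre2 hC,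
    pdirM_msym n hC, dotProduct_msym_mulVec_self]

theorem two_mul_vdiv_msym_mcurl_mulVec (hτ : ∀ i j, ContDiff ℝ 2 fun y => τ y i j) (u x : V3) :
    2 * vdiv (fun y => msym (mcurl τ y) *ᵥ u) x = vdiv (fun y => mcurl τ y *ᵥ u) x := by
  have hC : ∀ i j, DifferentiableAt ℝ (fun y => mcurl τ y i j) x :=
    fun i j => (contDiff_mcurl hτ i j).differentiable one_ne_zero x
  rw [vdiv_mulVec_const u (differentiableAt_msym hC), vdiv_mulVec_const u hC]
  simp only [transpose_msym]
  rw [mdiv_msym hC, mdiv_mcurl hτ, Pi.zero_apply, zero_add, dotProduct_smul, smul_eq_mul]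
  ring

theorem trace_Pm_mul_tr2inc_msym_mcurl_mul_Pm (hn : n ⬝ᵥ n = 1)
    (hτ : ∀ i j, ContDiff ℝ 2 fun y => τ y i j) (hsym : ∀ y, (τ y)ᵀ = τ y) (x : V3) :
    (Pm n * tr2inc n (fun y => msym (mcurl τ y)) x * Pm n).trace =
      vdiv (mdiv fun y => Pm n * mcrossv (τ y) n) x := by
  have hC : ∀ i j, DifferentiableAt ℝ (fun y => mcurl τ y i j) x :=
    fun i j => (contDiff_mcurl hτ i j).differentiable one_ne_zero x
  have htrace : (pdirM n (fun y => msym (mcurl τ y)) x).trace = 0 := by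
    rw [trace_pdirM n (differentiableAt_msym hC)]
    simp [trace_msym, trace_mcurl_of_symm hsym, pdir]
  have hmdiv : ∀ y, Pm n *ᵥ mcurl τ y *ᵥ n =
      mdiv (fun z => Pm n * mcrossv (τ z) n) y := fun y => by
    rw [mcurl_mulVec n fun i j => (hτ i j).differentiable two_ne_zero y,
      mdiv_const_mul _ fun i j => (contDiff_mcrossv n hτ i j).differentiable two_ne_zero y]
  calc (Pm n * tr2inc n (fun y => msym (mcurl τ y)) x * Pm n).trace
      = vdiv (fun y => mcurl τ y *ᵥ n) x - n ⬝ᵥ pdirV n (fun y => mcurl τ y *ᵥ n) x := by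
        rw [trace_Pm_mul_tr2inc_mul_Pm hn (differentiableAt_msym hC), htrace, sub_zero,
          two_mul_vdiv_msym_mcurl_mulVec hτ, pdirM_msym n hC, dotProduct_msym_mulVec_self,
          pdirV_mulVec_const n n hC]
    _ = vdiv (fun y => Pm n *ᵥ mcurl τ y *ᵥ n) x :=
        (vdiv_Pm_mulVec n (differentiableAt_mulVec_const n hC)).symm
    _ = vdiv (mdiv fun y => Pm n * mcrossv (τ y) n) x := by simp only [hmdiv]

end SymCurl

theorem edge_trace_tr3cott_tt_general (τ : V3 → M3)
    (hτ : ∀ i j, ContDiff ℝ 2 fun x => τ x i j) (hsym : ∀ x, (τ x)ᵀ = τ x) (t m n : V3)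
    (ht : dotp t t = 1) (hm : dotp m m = 1) (hn : dotp n n = 1)
    (htm : dotp t m = 0) (htn : dotp t n = 0) (hmn : dotp m n = 0) (x : V3) :
    dotp t ((tr3cott n τ x).mulVec t) =
      dotp n (tre2 t τ x)
        - (1 / 2 : ℝ) * divfV t m (divfM t m (tr1cott n τ)) x := by
  simp only [dotp_eq_dotProduct] at *
  have hC : ∀ i j, DifferentiableAt ℝ (fun y => mcurl τ y i j) x :=
    fun i j => (contDiff_mcurl hτ i j).differentiable one_ne_zero x
  have hframe := sum_vecMulVec_self_eq_one ht hm hn htm htn hmn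
  rw [tr3cott, dotProduct_devf_mulVec _ ht htn, dotProduct_tr2inc_msym_mcurl_mulVec htn hC,
    trace_Pm_mul_tr2inc_msym_mcurl_mul_Pm hn hτ hsym, divfV_divfM_tr1cott hframe hn hτ]

/-- edge trace identity
tᵀ(tr3cott τ)t = n·tre2(τ) − (1/2) div_f div_f (tr1cott τ). -/
theorem edge_trace_tr3cott_tt (τ : V3 → M3) (hτ : SmoothM τ) (hsym : ∀ x, (τ x)ᵀ = τ x)
    (t m n : V3)
    (ht : dotp t t = 1) (hm : dotp m m = 1) (hn : dotp n n = 1)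
    (htm : dotp t m = 0) (htn : dotp t n = 0) (hmn : dotp m n = 0) :
    ∀ x, dotp t ((tr3cott n τ x).mulVec t) =
      dotp n (tre2 t τ x)
        - (1 / 2 : ℝ) * divfV t m (divfM t m (tr1cott n τ)) x := by
  exact edge_trace_tr3cott_tt_general τ (fun i j => contDiff_infty.mp (hτ i j) 2) hsym t m n
    ht hm hn htm htn hmn

end
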